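/- arXiv:1910.10692 — 3 statements merged into one kernel-verified Lean document; each statement's English description precedes it below -/
import Mathlib

section
/- Let t ≥ 2, let T be an order-t tensor with all sides of size n, and let H be the walk hypergraph of a connected d-regular graph G on n vertices whose adjacency-matrix second-largest eigenvalue in absolute value is λ ∈ (0,d). Suppose T̂ is any order-t tensor satisfying T̂_e = T_e for every hyperedge e ∈ E(H) and ‖T̂‖_max ≤ ‖T‖_max. Then (1/n^t)·‖T̂ − T‖_F² ≤ 2^t·(2t−3)·1.783^{t−1}·‖T‖_max²·(λ/d), where 1.783 is an upper bound on Grothendieck's constant over ℝ. -/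
open Classical

/-- `‖U‖_{2,∞}`: the maximum ℓ2-norm of a row of `U`. -/
noncomputable def rowTwoInf {α : Type*} {r : ℕ} (U : α → Fin r → ℝ) : ℝ :=
  ⨆ a : α, Real.sqrt (∑ l, (U a l) ^ 2)

/-- The max-quasinorm of an order-`t` tensor: the infimum over all rank-`r`
factorizations `T = U⁽¹⁾ ∘ ⋯ ∘ U⁽ᵗ⁾` (over all `r`) of `∏ i, ‖U⁽ⁱ⁾‖_{2,∞}`. -/
noncomputable def maxQnorm {t : ℕ} {n : Fin t → ℕ}
    (T : ((i : Fin t) → Fin (n i)) → ℝ) : ℝ :=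
  sInf { c : ℝ | ∃ (r : ℕ) (U : (i : Fin t) → Fin (n i) → Fin r → ℝ),
    (∀ x, T x = ∑ l : Fin r, ∏ i, U i (x i) l) ∧ c = ∏ i, rowTwoInf (U i) }

/-- Hyperedges of the walk hypergraph of a graph `G`: a tuple
`(v 0, …, v (t-1))` is a hyperedge iff it is a walk of length `t-1` in `G`. -/
def walkEdge {t n : ℕ} (G : SimpleGraph (Fin n)) (v : Fin t → Fin n) : Prop :=
  ∀ i : Fin (t - 1),
    G.Adj (v ⟨(i : ℕ), by have := i.isLt; omega⟩)
      (v ⟨(i : ℕ) + 1, by have := i.isLt; omega⟩)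

lemma sum_adjMatrix_row {n d : ℕ} (G : SimpleGraph (Fin n)) [DecidableRel G.Adj]
    (hreg : G.IsRegularOfDegree d) (y : Fin n) : ∑ z, G.adjMatrix ℝ y z = d := by
  have h := G.adjMatrix_mulVec_const_apply (α := ℝ) (a := 1) (v := y)
  rw [hreg.degree_eq y] at h
  simpa [Matrix.mulVec, dotProduct] using h

open Finset in
/-- Jensen's inequality for averaging over neighbours in a regular graph. -/
lemma sum_sq_adjMatrix_mulVec_le {n d : ℕ} (G : SimpleGraph (Fin n)) [DecidableRel G.Adj]
    (hreg : G.IsRegularOfDegree d) (f : Fin n → ℝ) :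
    ∑ y, (∑ z, G.adjMatrix ℝ y z * f z) ^ 2 ≤ (d : ℝ) ^ 2 * ∑ z, f z ^ 2 := by
  have hrow := sum_adjMatrix_row G hreg
  have hcol : ∀ z, ∑ y, G.adjMatrix ℝ y z = d := fun z => by
    rw [← hrow z]
    exact sum_congr rfl fun y _ => by simp [SimpleGraph.adjMatrix_apply, G.adj_comm]
  have hnn : ∀ y z, 0 ≤ G.adjMatrix ℝ y z := fun y z => by
    rw [SimpleGraph.adjMatrix_apply]; split_ifs <;> norm_num
  calc ∑ y, (∑ z, G.adjMatrix ℝ y z * f z) ^ 2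
      ≤ ∑ y, (∑ z, G.adjMatrix ℝ y z) * ∑ z, G.adjMatrix ℝ y z * f z ^ 2 :=
        sum_le_sum fun y _ => sum_sq_le_sum_mul_sum_of_sq_le_mul _ (fun z _ => hnn y z)
          (fun z _ => mul_nonneg (hnn y z) (sq_nonneg _)) (fun z _ => le_of_eq (by ring))
    _ = (d : ℝ) ^ 2 * ∑ z, f z ^ 2 := by
        simp_rw [hrow]
        rw [← mul_sum, sum_comm]
        simp_rw [← sum_mul, hcol]
        rw [← mul_sum]; ring

/-- The expander mixing estimate: replacing the normalized adjacency matrix by the averaging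
operator in a bilinear form. -/
lemma abs_walk_form_sub_mean_le {n d : ℕ} (G : SimpleGraph (Fin n)) [DecidableRel G.Adj]
    (hreg : G.IsRegularOfDegree d) (hn : 0 < n) {lam : ℝ} (hlam0 : 0 < lam) (hlamd : lam < d)
    (hlam : ∀ u : Fin n → ℝ, ∑ i, u i = 0 →
      ∑ j, ((G.adjMatrix ℝ).mulVec u j) ^ 2 ≤ lam ^ 2 * ∑ i, (u i) ^ 2)
    (u f : Fin n → ℝ) :
    |(∑ y, u y * ∑ z, G.adjMatrix ℝ y z / d * f z) / n - (∑ y, u y) / n * ((∑ z, f z) / n)| ≤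
      lam / d * ((∑ y, u y ^ 2) + ∑ z, f z ^ 2) / (2 * n) := by
  have hn' : (0 : ℝ) < n := by exact_mod_cast hn
  have hd : (0 : ℝ) < d := hlam0.trans hlamd
  have hrow := sum_adjMatrix_row G hreg
  set m : ℝ := (∑ z, f z) / n with hm
  have hsum : ∑ z, f z = n * m := by rw [hm]; field_simp
  set g : Fin n → ℝ := fun z => f z - m
  have hg0 : ∑ z, g z = 0 := by simp [g, hsum]
  have hg2 : ∑ z, g z ^ 2 ≤ ∑ z, f z ^ 2 := by
    have : ∑ z, g z ^ 2 = ∑ z, f z ^ 2 - n * m ^ 2 := by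
      have e : ∀ z, g z ^ 2 = f z ^ 2 - 2 * m * f z + m ^ 2 := fun z => by simp only [g]; ring
      simp_rw [e, Finset.sum_add_distrib, Finset.sum_sub_distrib, ← Finset.mul_sum, hsum]
      simp; ring
    have : 0 ≤ n * m ^ 2 := by positivity
    linarith
  have hw := hlam g hg0
  set w := (G.adjMatrix ℝ).mulVec g with hwdef
  have hPf : ∀ y, ∑ z, G.adjMatrix ℝ y z / d * f z = w y / d + m := fun y => by
    have : w y = ∑ z, G.adjMatrix ℝ y z * f z - d * m := by
      simp only [hwdef, Matrix.mulVec, dotProduct, g, mul_sub, Finset.sum_sub_distrib,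
        ← Finset.sum_mul, hrow]
    rw [this]
    simp_rw [div_mul_eq_mul_div, ← Finset.sum_div]
    field_simp; ring
  have hmain : (∑ y, u y * ∑ z, G.adjMatrix ℝ y z / d * f z) / n - (∑ y, u y) / n * m =
      (∑ y, u y * w y) / (d * n) := by
    simp_rw [hPf, mul_add, Finset.sum_add_distrib, ← Finset.sum_mul, ← mul_div_assoc,
      ← Finset.sum_div]
    field_simp; ring
  have hbound : |∑ y, u y * w y| ≤ lam * ((∑ y, u y ^ 2) + ∑ z, f z ^ 2) / 2 := by
    have hpt : ∀ y, |u y * w y| ≤ lam / 2 * u y ^ 2 + 1 / (2 * lam) * w y ^ 2 := fun y => by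
      have key : lam / 2 * u y ^ 2 + 1 / (2 * lam) * w y ^ 2 - |u y * w y| =
          1 / (2 * lam) * (lam * |u y| - |w y|) ^ 2 := by
        rw [abs_mul, ← sq_abs (u y), ← sq_abs (w y)]; field_simp; ring
      have : 0 ≤ 1 / (2 * lam) * (lam * |u y| - |w y|) ^ 2 := by positivity
      linarith
    calc |∑ y, u y * w y| ≤ ∑ y, |u y * w y| := Finset.abs_sum_le_sum_abs _ _
      _ ≤ ∑ y, (lam / 2 * u y ^ 2 + 1 / (2 * lam) * w y ^ 2) :=
          Finset.sum_le_sum fun y _ => hpt y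
      _ = lam / 2 * ∑ y, u y ^ 2 + 1 / (2 * lam) * ∑ y, w y ^ 2 := by
          rw [Finset.sum_add_distrib, ← Finset.mul_sum, ← Finset.mul_sum]
      _ ≤ lam / 2 * ∑ y, u y ^ 2 + 1 / (2 * lam) * (lam ^ 2 * ∑ z, f z ^ 2) := by
          gcongr; exact hw.trans (by gcongr)
      _ = _ := by field_simp
  rw [hmain, abs_div, abs_of_pos (mul_pos hd hn'), div_le_iff₀ (mul_pos hd hn')]
  refine hbound.trans (le_of_eq ?_)
  field_simp

/-- `walkSum P u y` is the sum of `∏ i, u i (x i)` over all tuples `x` starting at `y`, weighted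
by the product of the transition weights `P` along `x`. -/
noncomputable def walkSum {n : ℕ} (P : Fin n → Fin n → ℝ) :
    (m : ℕ) → (Fin (m + 1) → Fin n → ℝ) → Fin n → ℝ
  | 0, u, y => u 0 y
  | m + 1, u, y => u 0 y * ∑ z, P y z * walkSum P m (fun i => u i.succ) z

lemma walkSum_eq_sum {n : ℕ} (P : Fin n → Fin n → ℝ) (m : ℕ) (u : Fin (m + 1) → Fin n → ℝ)
    (y : Fin n) :
    walkSum P m u y = ∑ x : Fin m → Fin n,
      (∏ i : Fin m, P ((Fin.cons y x : Fin (m + 1) → Fin n) i.castSucc) (x i)) *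
        (u 0 y * ∏ i, u i.succ (x i)) := by
  induction m generalizing y with
  | zero => simp [walkSum]
  | succ m ih =>
    rw [walkSum, ← (Fin.consEquiv fun _ : Fin (m + 1) => Fin n).sum_comp, Fintype.sum_prod_type,
      Finset.mul_sum]
    refine Finset.sum_congr rfl fun z _ => ?_
    rw [ih, Finset.mul_sum, Finset.mul_sum]
    refine Finset.sum_congr rfl fun x _ => ?_
    simp only [Fin.consEquiv_apply, Fin.prod_univ_succ (n := m), Fin.cons_zero, Fin.cons_succ,
      Fin.castSucc_zero, ← Fin.succ_castSucc]
    ring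

lemma sum_walkSum {n : ℕ} (P : Fin n → Fin n → ℝ) (m : ℕ) (u : Fin (m + 1) → Fin n → ℝ) :
    ∑ y, walkSum P m u y = ∑ x : Fin (m + 1) → Fin n,
      (∏ i : Fin m, P (x i.castSucc) (x i.succ)) * ∏ i, u i (x i) := by
  rw [← (Fin.consEquiv fun _ : Fin (m + 1) => Fin n).sum_comp, Fintype.sum_prod_type]
  refine Finset.sum_congr rfl fun y _ => ?_
  rw [walkSum_eq_sum]
  refine Finset.sum_congr rfl fun x _ => ?_
  simp [Fin.consEquiv_apply, Fin.prod_univ_succ (n := m)]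

lemma abs_le_one_of_sum_sq_le_one {L : Type*} [Fintype L] {f : L → ℝ}
    (h : ∑ l, f l ^ 2 ≤ 1) (l : L) : |f l| ≤ 1 := by
  rw [← sq_le_one_iff_abs_le_one]
  exact (Finset.single_le_sum (fun k _ => sq_nonneg (f k)) (Finset.mem_univ l)).trans h

lemma sum_sum_sq_le_card {n : ℕ} {L : Type*} [Fintype L] {V : Fin n → L → ℝ}
    (hV : ∀ a, ∑ l, V a l ^ 2 ≤ 1) : ∑ l, ∑ y, V y l ^ 2 ≤ n := by
  rw [Finset.sum_comm]
  exact (Finset.sum_le_sum fun y _ => hV y).trans (by simp)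

lemma sum_sum_sq_walkSum_le {n d : ℕ} (G : SimpleGraph (Fin n)) [DecidableRel G.Adj]
    (hreg : G.IsRegularOfDegree d) (hd : 0 < d) {L : Type*} [Fintype L] (m : ℕ)
    (U : Fin (m + 1) → Fin n → L → ℝ) (hU : ∀ i a, ∑ l, U i a l ^ 2 ≤ 1) :
    ∑ l, ∑ y, walkSum (fun y z => G.adjMatrix ℝ y z / d) m (fun i a => U i a l) y ^ 2 ≤ n := by
  induction m with
  | zero => exact sum_sum_sq_le_card (hU 0)
  | succ m ih =>
    refine le_trans (Finset.sum_le_sum fun l _ => ?_)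
      (ih (fun i => U i.succ) fun i a => hU i.succ a)
    have hd' : (0 : ℝ) < d := by exact_mod_cast hd
    set f := walkSum (fun y z => G.adjMatrix ℝ y z / d) m (fun i a => U i.succ a l)
    have h := sum_sq_adjMatrix_mulVec_le G hreg f
    calc ∑ y, walkSum (fun y z => G.adjMatrix ℝ y z / d) (m + 1) (fun i a => U i a l) y ^ 2
        ≤ ∑ y, (∑ z, G.adjMatrix ℝ y z * f z) ^ 2 / (d : ℝ) ^ 2 := by
          refine Finset.sum_le_sum fun y _ => ?_
          have h1 : U 0 y l ^ 2 ≤ 1 :=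
            (sq_le_one_iff_abs_le_one _).2 (abs_le_one_of_sum_sq_le_one (hU 0 y) l)
          rw [walkSum, mul_pow]
          simp_rw [div_mul_eq_mul_div]
          rw [← Finset.sum_div, div_pow]
          exact mul_le_of_le_one_left (by positivity) h1
      _ ≤ ∑ z, f z ^ 2 := by
          rw [← Finset.sum_div, div_le_iff₀ (by positivity)]; linarith

/-- Averaging a bounded factorized tensor over walks instead of over all tuples. -/
lemma sum_abs_walk_mean_sub_prod_mean_le {n d : ℕ} (G : SimpleGraph (Fin n)) [DecidableRel G.Adj]
    (hreg : G.IsRegularOfDegree d) (hn : 0 < n) {lam : ℝ} (hlam0 : 0 < lam) (hlamd : lam < d)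
    (hlam : ∀ u : Fin n → ℝ, ∑ i, u i = 0 →
      ∑ j, ((G.adjMatrix ℝ).mulVec u j) ^ 2 ≤ lam ^ 2 * ∑ i, (u i) ^ 2)
    {L : Type*} [Fintype L] (m : ℕ)
    (U : Fin (m + 1) → Fin n → L → ℝ) (hU : ∀ i a, ∑ l, U i a l ^ 2 ≤ 1) :
    ∑ l, |(∑ y, walkSum (fun y z => G.adjMatrix ℝ y z / d) m (fun i a => U i a l) y) / n -
      ∏ i, (∑ y, U i y l) / n| ≤ m * (lam / d) := by
  have hn' : (0 : ℝ) < n := by exact_mod_cast hn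
  have hd : (0 : ℝ) < d := hlam0.trans hlamd
  induction m with
  | zero => simp [walkSum]
  | succ m ih =>
    have ih' := ih (fun i => U i.succ) fun i a => hU i.succ a
    have hf := sum_sum_sq_walkSum_le G hreg (by exact_mod_cast hd) m (fun i => U i.succ)
      fun i a => hU i.succ a
    set f : L → Fin n → ℝ := fun l =>
      walkSum (fun y z => G.adjMatrix ℝ y z / d) m (fun i a => U i.succ a l)
    have hpt : ∀ l, |(∑ y, walkSum (fun y z => G.adjMatrix ℝ y z / d) (m + 1)
          (fun i a => U i a l) y) / n - ∏ i, (∑ y, U i y l) / n| ≤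
        lam / d * ((∑ y, U 0 y l ^ 2) + ∑ z, f l z ^ 2) / (2 * n) +
          |(∑ y, f l y) / n - ∏ i : Fin (m + 1), (∑ y, U i.succ y l) / n| := by
      intro l
      have hmix := abs_walk_form_sub_mean_le G hreg hn hlam0 hlamd hlam (fun y => U 0 y l) (f l)
      have hmean : |(∑ y, U 0 y l) / n| ≤ 1 := by
        rw [abs_div, abs_of_pos hn', div_le_one hn']
        refine (Finset.abs_sum_le_sum_abs _ _).trans ?_
        exact (Finset.sum_le_sum fun y _ =>
          abs_le_one_of_sum_sq_le_one (hU 0 y) l).trans (by simp)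
      rw [Fin.prod_univ_succ]
      simp only [walkSum]
      refine (abs_sub_le _ ((∑ y, U 0 y l) / n * ((∑ z, f l z) / n)) _).trans
        (add_le_add hmix ?_)
      rw [← mul_sub, abs_mul]
      exact mul_le_of_le_one_left (abs_nonneg _) hmean
    refine (Finset.sum_le_sum fun l _ => hpt l).trans ?_
    rw [Finset.sum_add_distrib, ← Finset.sum_div, ← Finset.mul_sum, Finset.sum_add_distrib]
    have hu := sum_sum_sq_le_card (hU 0)
    have h1 : lam / d * ((∑ l, ∑ y, U 0 y l ^ 2) + ∑ l, ∑ z, f l z ^ 2) / (2 * n) ≤ lam / d := by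
      rw [div_le_iff₀ (by positivity)]
      gcongr; linarith
    push_cast
    linarith

/-- A factorized tensor with unit row bounds which vanishes on all walks has a small mean. -/
lemma abs_mean_le_of_vanish_on_walks {n d : ℕ} (G : SimpleGraph (Fin n)) [DecidableRel G.Adj]
    (hreg : G.IsRegularOfDegree d) (hn : 0 < n) {lam : ℝ} (hlam0 : 0 < lam) (hlamd : lam < d)
    (hlam : ∀ u : Fin n → ℝ, ∑ i, u i = 0 →
      ∑ j, ((G.adjMatrix ℝ).mulVec u j) ^ 2 ≤ lam ^ 2 * ∑ i, (u i) ^ 2)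
    {L : Type*} [Fintype L] (m : ℕ)
    (U : Fin (m + 1) → Fin n → L → ℝ) (hU : ∀ i a, ∑ l, U i a l ^ 2 ≤ 1)
    (hvan : ∀ x : Fin (m + 1) → Fin n, walkEdge G x → ∑ l, ∏ i, U i (x i) l = 0) :
    |(∑ x : Fin (m + 1) → Fin n, ∑ l, ∏ i, U i (x i) l) / (n : ℝ) ^ (m + 1)| ≤
      m * (lam / d) := by
  have h := sum_abs_walk_mean_sub_prod_mean_le G hreg hn hlam0 hlamd hlam m U hU
  have hwalk : ∑ l, ∑ y, walkSum (fun y z => G.adjMatrix ℝ y z / d) m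
      (fun i a => U i a l) y = 0 := by
    simp_rw [sum_walkSum]
    rw [Finset.sum_comm]
    refine Finset.sum_eq_zero fun x _ => ?_
    rw [← Finset.mul_sum, mul_eq_zero, or_iff_not_imp_left]
    intro hne
    refine hvan x fun i => ?_
    have hi : G.adjMatrix ℝ (x i.castSucc) (x i.succ) / d ≠ 0 :=
      Finset.prod_ne_zero_iff.1 hne i (Finset.mem_univ i)
    by_contra hadj
    refine hi ?_
    rw [SimpleGraph.adjMatrix_apply]
    exact (congrArg (· / (d : ℝ)) (if_neg hadj)).trans (zero_div _)
  have hprod : ∑ l, ∏ i, (∑ y, U i y l) / n =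
      (∑ x : Fin (m + 1) → Fin n, ∑ l, ∏ i, U i (x i) l) / (n : ℝ) ^ (m + 1) := by
    rw [Finset.sum_comm, Finset.sum_div]
    refine Finset.sum_congr rfl fun l _ => ?_
    rw [Finset.prod_div_distrib, Finset.prod_univ_sum]
    simp
  rw [← abs_neg, ← hprod]
  refine le_trans (le_of_eq ?_) ((Finset.abs_sum_le_sum_abs _ _).trans h)
  rw [Finset.sum_sub_distrib, ← Finset.sum_div, hwalk, zero_div, zero_sub]

lemma rowTwoInf_nonneg {α : Type*} {r : ℕ} (U : α → Fin r → ℝ) : 0 ≤ rowTwoInf U :=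
  Real.iSup_nonneg fun _ => Real.sqrt_nonneg _

lemma sum_sq_le_rowTwoInf_sq {α : Type*} [Finite α] {r : ℕ} (U : α → Fin r → ℝ) (a : α) :
    ∑ l, U a l ^ 2 ≤ rowTwoInf U ^ 2 :=
  (Real.sqrt_le_left (rowTwoInf_nonneg U)).1
    (le_ciSup (Set.finite_range fun a => Real.sqrt (∑ l, U a l ^ 2)).bddAbove a)

lemma maxQnorm_nonneg {t n : ℕ} (T : (Fin t → Fin n) → ℝ) :
    0 ≤ maxQnorm (n := fun _ => n) T := by
  refine Real.sInf_nonneg ?_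
  rintro _ ⟨r, U, -, rfl⟩
  exact Finset.prod_nonneg fun i _ => rowTwoInf_nonneg _

lemma exists_factorization {m n : ℕ} (T : (Fin (m + 1) → Fin n) → ℝ) :
    ∃ (r : ℕ) (U : Fin (m + 1) → Fin n → Fin r → ℝ), ∀ x, T x = ∑ l, ∏ i, U i (x i) l := by
  let e := Fintype.equivFin (Fin (m + 1) → Fin n)
  refine ⟨_, fun i a l => (if a = e.symm l i then 1 else 0) *
    (if i = 0 then T (e.symm l) else 1), fun x => ?_⟩
  rw [e.symm.sum_comp fun y => ∏ i, (if x i = y i then (1 : ℝ) else 0) * if i = 0 then T y else 1]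
  rw [Finset.sum_eq_single x]
  · simp
  · intro y _ hy
    obtain ⟨i, hi⟩ := Function.ne_iff.1 hy
    exact Finset.prod_eq_zero (Finset.mem_univ i) (by simp [Ne.symm hi])
  · simp

/-- Any `c > ‖T‖_max` can be split off, leaving a factorization with unit row bounds; the sign
`s` allows the same for `-T`. -/
lemma exists_normalized_factorization {m n : ℕ} (T : (Fin (m + 1) → Fin n) → ℝ) {c : ℝ}
    (hc : maxQnorm (n := fun _ => n) T < c) (s : ℝ) (hs : |s| = 1) :
    ∃ (r : ℕ) (U : Fin (m + 1) → Fin n → Fin r → ℝ),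
      (∀ i a, ∑ l, U i a l ^ 2 ≤ 1) ∧ ∀ x, s * T x = c * ∑ l, ∏ i, U i (x i) l := by
  have hcpos : 0 < c := (maxQnorm_nonneg T).trans_lt hc
  obtain ⟨r₀, U₀, h₀⟩ := exists_factorization T
  rw [maxQnorm] at hc
  obtain ⟨_, ⟨r, U, hT, rfl⟩, hlt⟩ := exists_lt_of_csInf_lt (by exact ⟨_, r₀, U₀, h₀, rfl⟩) hc
  set a : Fin (m + 1) → ℝ := fun i => rowTwoInf (U i)
  have ha : ∀ i, 0 ≤ a i := fun i => rowTwoInf_nonneg _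
  have hp : 0 ≤ ∏ i, a i := Finset.prod_nonneg fun i _ => ha i
  set k : ℝ := s * (∏ i, a i) / c
  have hk : k ^ 2 ≤ 1 := by
    rw [sq_le_one_iff_abs_le_one, abs_div, abs_mul, hs, one_mul, abs_of_nonneg hp,
      abs_of_pos hcpos, div_le_one hcpos]
    exact hlt.le
  refine ⟨r, fun i x l => U i x l / a i * if i = 0 then k else 1, fun i x => ?_, fun x => ?_⟩
  · simp_rw [mul_pow, div_pow]
    rw [← Finset.sum_mul, ← Finset.sum_div]
    refine mul_le_one₀ (div_le_one_of_le₀ (sum_sq_le_rowTwoInf_sq (U i) x) (sq_nonneg _))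
      (sq_nonneg _) ?_
    split_ifs
    · exact hk
    · norm_num
  · have hU : ∀ i l, U i (x i) l = a i * (U i (x i) l / a i) := fun i l => by
      rcases eq_or_ne (a i) 0 with h | h
      · have h2 := sum_sq_le_rowTwoInf_sq (U i) (x i)
        rw [show rowTwoInf (U i) = 0 from h] at h2
        have h3 := (Finset.single_le_sum (fun k _ => sq_nonneg (U i (x i) k))
          (Finset.mem_univ l)).trans h2
        have : U i (x i) l = 0 := by nlinarith
        simp [this]
      · field_simp
    have hprod : ∀ l, ∏ i, U i (x i) l = (∏ i, a i) * ∏ i, U i (x i) l / a i := fun l => by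
      rw [← Finset.prod_mul_distrib]
      exact Finset.prod_congr rfl fun i _ => hU i l
    rw [hT]
    simp_rw [Finset.prod_mul_distrib, hprod]
    rw [← Finset.mul_sum, ← Finset.sum_mul]
    simp only [Finset.prod_ite_eq', Finset.mem_univ, if_true, k]
    field_simp

/-- The entrywise square of a difference of tensors of max-quasinorm below `c` has a factorization
with unit row bounds after dividing by `2 ^ (m + 1) * c ^ 2`. -/
lemma exists_sq_sub_factorization {m n : ℕ} (S T : (Fin (m + 1) → Fin n) → ℝ) {c : ℝ}
    (hS : maxQnorm (n := fun _ => n) S < c) (hT : maxQnorm (n := fun _ => n) T < c) :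
    ∃ (L : Type) (_ : Fintype L) (U : Fin (m + 1) → Fin n → L → ℝ),
      (∀ i a, ∑ l, U i a l ^ 2 ≤ 1) ∧
        ∀ x, (S x - T x) ^ 2 = 2 ^ (m + 1) * c ^ 2 * ∑ l, ∏ i, U i (x i) l := by
  obtain ⟨r₁, U₁, hU₁, h₁⟩ := exists_normalized_factorization S hS 1 (by simp)
  obtain ⟨r₂, U₂, hU₂, h₂⟩ := exists_normalized_factorization T hT (-1) (by simp)
  let V : Fin (m + 1) → Fin n → Fin r₁ ⊕ Fin r₂ → ℝ := fun i a => Sum.elim (U₁ i a) (U₂ i a)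
  have hV : ∀ i a, ∑ l, V i a l ^ 2 ≤ 2 := fun i a => by
    rw [Fintype.sum_sum_type]
    have := hU₁ i a
    have := hU₂ i a
    simp only [V, Sum.elim_inl, Sum.elim_inr]
    linarith
  have hST : ∀ x, S x - T x = c * ∑ l, ∏ i, V i (x i) l := fun x => by
    rw [Fintype.sum_sum_type, mul_add]
    simp only [V, Sum.elim_inl, Sum.elim_inr]
    rw [← h₁, ← h₂]; ring
  refine ⟨(Fin r₁ ⊕ Fin r₂) × (Fin r₁ ⊕ Fin r₂), inferInstance,
    fun i a p => V i a p.1 * V i a p.2 / 2, fun i a => ?_, fun x => ?_⟩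
  · have h0 : 0 ≤ ∑ l, V i a l ^ 2 := Finset.sum_nonneg fun l _ => sq_nonneg _
    calc ∑ p : (Fin r₁ ⊕ Fin r₂) × (Fin r₁ ⊕ Fin r₂), (V i a p.1 * V i a p.2 / 2) ^ 2
        = (∑ l, V i a l ^ 2) * (∑ l, V i a l ^ 2) / 4 := by
          rw [Finset.sum_mul_sum, Fintype.sum_prod_type, Finset.sum_div]
          refine Finset.sum_congr rfl fun l _ => ?_
          rw [Finset.sum_div]
          exact Finset.sum_congr rfl fun k _ => by ring
      _ ≤ 1 := by nlinarith [hV i a]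
  · rw [hST, mul_pow, sq (∑ l, _), Finset.sum_mul_sum, Fintype.sum_prod_type, mul_right_comm,
      mul_comm _ (c ^ 2), Finset.mul_sum Finset.univ _ (2 ^ (m + 1))]
    congr 1
    refine Finset.sum_congr rfl fun l _ => ?_
    rw [Finset.mul_sum]
    refine Finset.sum_congr rfl fun k _ => ?_
    rw [Finset.prod_div_distrib, Finset.prod_mul_distrib, Finset.prod_const,
      Finset.card_univ, Fintype.card_fin]
    field_simp

/-- Deterministic tensor completion with the walk hypergraph of a `d`-regular
expander graph: max-quasinorm minimization error bound. -/
theorem tensor_completion_walk_hypergraph (t n d : ℕ) (ht : 2 ≤ t)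
    (G : SimpleGraph (Fin n)) [DecidableRel G.Adj]
    (hconn : G.Connected) (hreg : G.IsRegularOfDegree d)
    (lam : ℝ) (hlam0 : 0 < lam) (hlamd : lam < d)
    -- `lam` bounds (in absolute value) all adjacency eigenvalues on the
    -- orthogonal complement of the all-ones vector, i.e. the second-largest
    -- eigenvalue in absolute value is at most `lam`:
    (hlam : ∀ u : Fin n → ℝ, ∑ i, u i = 0 →
      ∑ j, ((G.adjMatrix ℝ).mulVec u j) ^ 2 ≤ lam ^ 2 * ∑ i, (u i) ^ 2)
    (T That : (Fin t → Fin n) → ℝ)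
    (hagree : ∀ v : Fin t → Fin n, walkEdge G v → That v = T v)
    (hmin : maxQnorm (n := fun _ => n) That ≤ maxQnorm (n := fun _ => n) T) :
    (1 / (n : ℝ) ^ t) * ∑ x : Fin t → Fin n, (That x - T x) ^ 2 ≤
      2 ^ t * (2 * (t : ℝ) - 3) * 1.783 ^ (t - 1) *
        (maxQnorm (n := fun _ => n) T) ^ 2 * (lam / d) := by
  obtain ⟨m, rfl⟩ : ∃ m, t = m + 1 := ⟨t - 1, by omega⟩
  have hn : 0 < n := Fin.pos_iff_nonempty.2 hconn.nonempty
  have hn' : (0 : ℝ) < n := by exact_mod_cast hn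
  have hd : (0 : ℝ) < d := hlam0.trans hlamd
  have hm : (1 : ℝ) ≤ m := by
    have : 1 ≤ m := by omega
    exact_mod_cast this
  set M := maxQnorm (n := fun _ => n) T
  have hbound : ∀ c, M < c →
      (1 / (n : ℝ) ^ (m + 1)) * ∑ x : Fin (m + 1) → Fin n, (That x - T x) ^ 2 ≤
        2 ^ (m + 1) * m * (lam / d) * c ^ 2 := by
    intro c hc
    have hcpos : 0 < c := (maxQnorm_nonneg T).trans_lt hc
    obtain ⟨L, _, U, hU, hsq⟩ := exists_sq_sub_factorization That T (hmin.trans_lt hc) hc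
    have hvan : ∀ x : Fin (m + 1) → Fin n, walkEdge G x → ∑ l, ∏ i, U i (x i) l = 0 := by
      intro x hx
      have h := hsq x
      rw [hagree x hx, sub_self, zero_pow two_ne_zero] at h
      exact (mul_eq_zero.1 h.symm).resolve_left (by positivity)
    have h := (le_abs_self _).trans
      (abs_mean_le_of_vanish_on_walks G hreg hn hlam0 hlamd hlam m U hU hvan)
    simp_rw [hsq]
    rw [← Finset.mul_sum]
    calc _ = 2 ^ (m + 1) * c ^ 2 *
          ((∑ x : Fin (m + 1) → Fin n, ∑ l, ∏ i, U i (x i) l) / (n : ℝ) ^ (m + 1)) := by ring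
      _ ≤ 2 ^ (m + 1) * c ^ 2 * (m * (lam / d)) := by gcongr
      _ = _ := by ring
  have hlim : (1 / (n : ℝ) ^ (m + 1)) * ∑ x : Fin (m + 1) → Fin n, (That x - T x) ^ 2 ≤
      2 ^ (m + 1) * m * (lam / d) * M ^ 2 := by
    have hcont : Continuous fun c : ℝ => 2 ^ (m + 1) * m * (lam / d) * c ^ 2 := by fun_prop
    exact ge_of_tendsto (hcont.continuousWithinAt (s := Set.Ioi M) (x := M))
      (Filter.eventually_of_mem self_mem_nhdsWithin hbound)
  refine hlim.trans ?_
  have hconst : (m : ℝ) ≤ (2 * ((m + 1 : ℕ) : ℝ) - 3) * 1.783 ^ (m + 1 - 1) := by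
    have hpow : 1 + (m : ℝ) * 0.783 ≤ (1 + 0.783) ^ m :=
      one_add_mul_le_pow (by norm_num) m
    rw [Nat.add_sub_cancel]
    norm_num at hpow ⊢
    nlinarith
  calc 2 ^ (m + 1) * m * (lam / d) * M ^ 2 = 2 ^ (m + 1) * M ^ 2 * (lam / d) * m := by ring
    _ ≤ 2 ^ (m + 1) * M ^ 2 * (lam / d) *
        ((2 * ((m + 1 : ℕ) : ℝ) - 3) * 1.783 ^ (m + 1 - 1)) := by gcongr
    _ = _ := by ring
end

section
/- Let t ≥ 2, let G be a connected d-regular graph on n vertices with adjacency-matrix second-largest eigenvalue in absolute value λ ∈ (0,d), and let H be its walk hypergraph with parts V_1,…,V_t. For any non-empty subsets W_i ⊆ V_i with α_i := |W_i|/n, letting e(W_1,…,W_t) denote the number of hyperedges (v_1,…,v_t) with v_i ∈ W_i for all i, one has | e(W_1,…,W_t)/(n·d^{t−1}) − ∏_{i=1}^t α_i | ≤ (λ/d)·( √(α_1(1−α_1)α_2(1−α_2))·∏_{k=3}^t α_k + Σ_{i=3}^t √(α_1 α_i (1−α_i))·∏_{k=i+1}^t α_k ), and this quantity is at most (2t−3)·λ/(4d).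 -/
open Classical

namespace WalkMixing

open Finset

section Graph

variable {n : ℕ} (G : SimpleGraph (Fin n))

theorem walkEdge_snoc {k : ℕ} (v : Fin (k + 1) → Fin n) (x : Fin n) :
    walkEdge G (Fin.snoc v x : Fin (k + 2) → Fin n) ↔
      walkEdge G v ∧ G.Adj (v (Fin.last k)) x := by
  have hx : (Fin.snoc v x : Fin (k + 2) → Fin n) (Fin.last (k + 1)) = x := Fin.snoc_last _ _
  have hv (i : Fin (k + 1)) : (Fin.snoc v x : Fin (k + 2) → Fin n) i.castSucc = v i :=
    Fin.snoc_castSucc (α := fun _ => Fin n) _ _ _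
  constructor
  · intro h
    refine ⟨fun i => ?_, ?_⟩
    · have hi : (i : ℕ) < k := i.isLt
      have := h ⟨i, by omega⟩
      rw [← hv, ← hv]
      exact this
    · have : G.Adj ((Fin.snoc v x : Fin (k + 2) → Fin n) (Fin.last k).castSucc)
          ((Fin.snoc v x : Fin (k + 2) → Fin n) (Fin.last (k + 1))) := h ⟨k, by omega⟩
      rwa [hv, hx] at this
  · rintro ⟨h, hlast⟩ i
    have hi : (i : ℕ) < k + 1 := i.isLt
    rcases Nat.lt_succ_iff_lt_or_eq.mp hi with hi' | hi'
    · have := h ⟨i, by omega⟩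
      rw [← hv, ← hv] at this
      exact this
    · obtain rfl : i = Fin.last k := Fin.ext hi'
      have : G.Adj ((Fin.snoc v x : Fin (k + 2) → Fin n) (Fin.last k).castSucc)
          ((Fin.snoc v x : Fin (k + 2) → Fin n) (Fin.last (k + 1))) := by rwa [hv, hx]
      exact this

theorem forall_snoc_mem {k : ℕ} (W : ℕ → Finset (Fin n)) (v : Fin (k + 1) → Fin n) (x : Fin n) :
    (∀ i : Fin (k + 2), (Fin.snoc v x : Fin (k + 2) → Fin n) i ∈ W (i : ℕ)) ↔
      (∀ i : Fin (k + 1), v i ∈ W (i : ℕ)) ∧ x ∈ W (k + 1) := by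
  rw [Fin.forall_fin_succ']
  simp

variable [DecidableRel G.Adj]

/-- The weight `d ^ (-k)` times the number of walks `(v 0, …, v k)` in `G` with `v i ∈ W i` for
all `i` that end at a given vertex. -/
noncomputable def walkMass (d : ℕ) (W : ℕ → Finset (Fin n)) : ℕ → Fin n → ℝ
  | 0 => fun x => if x ∈ W 0 then 1 else 0
  | k + 1 => fun x =>
      (if x ∈ W (k + 1) then 1 else 0) * ((G.adjMatrix ℝ).mulVec (walkMass d W k) x / d)

/-- Summing a function of the endpoint over all walks through `W` amounts to integrating it
against `walkMass`. -/
theorem sum_walks_eq_sum_walkMass {d : ℕ} (hd : (d : ℝ) ≠ 0) (W : ℕ → Finset (Fin n)) (k : ℕ)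
    (φ : Fin n → ℝ) :
    ∑ v : Fin (k + 1) → Fin n,
        (if walkEdge G v ∧ ∀ i : Fin (k + 1), v i ∈ W (i : ℕ) then φ (v (Fin.last k)) else 0) =
      (d : ℝ) ^ k * ∑ x, walkMass G d W k x * φ x := by
  induction k generalizing φ with
  | zero =>
    rw [← (Equiv.funUnique (Fin 1) (Fin n)).symm.sum_comp]
    simp [walkMass, walkEdge]
  | succ k ih =>
    rw [← (Fin.snocEquiv (fun _ : Fin (k + 2) => Fin n)).sum_comp, Fintype.sum_prod_type,
      Finset.sum_comm]
    have key (v : Fin (k + 1) → Fin n) :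
        (∑ x, if walkEdge G (Fin.snoc v x : Fin (k + 2) → Fin n) ∧
            ∀ i : Fin (k + 2), (Fin.snoc v x : Fin (k + 2) → Fin n) i ∈ W (i : ℕ)
          then φ ((Fin.snoc v x : Fin (k + 2) → Fin n) (Fin.last (k + 1))) else 0) =
        if walkEdge G v ∧ ∀ i : Fin (k + 1), v i ∈ W (i : ℕ) then
          ∑ x, G.adjMatrix ℝ x (v (Fin.last k)) * ((if x ∈ W (k + 1) then 1 else 0) * φ x)
        else 0 := by
      by_cases h : walkEdge G v ∧ ∀ i : Fin (k + 1), v i ∈ W (i : ℕ)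
      · rw [if_pos h]
        refine sum_congr rfl fun x _ => ?_
        by_cases h1 : G.Adj (v (Fin.last k)) x <;> by_cases h2 : x ∈ W (k + 1) <;>
          simp [walkEdge_snoc, forall_snoc_mem, h, h1, h2, G.adj_comm x]
      · rw [if_neg h]
        refine sum_eq_zero fun x _ => if_neg ?_
        rw [walkEdge_snoc, forall_snoc_mem]
        tauto
    refine (sum_congr rfl fun v _ => key v).trans ?_
    rw [ih fun y => ∑ x, G.adjMatrix ℝ x y * ((if x ∈ W (k + 1) then 1 else 0) * φ x)]
    simp only [walkMass, Matrix.mulVec, dotProduct, mul_sum, sum_div, sum_mul]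
    rw [sum_comm]
    refine sum_congr rfl fun x _ => sum_congr rfl fun y _ => ?_
    field_simp
    ring

variable {G} {d : ℕ}

theorem sum_adjMatrix_mulVec (hreg : G.IsRegularOfDegree d) (u : Fin n → ℝ) :
    ∑ x, (G.adjMatrix ℝ).mulVec u x = d * ∑ x, u x := by
  have h (y : Fin n) : ∑ x, G.adjMatrix ℝ x y = d := by
    have := SimpleGraph.adjMatrix_mulVec_const_apply_of_regular (α := ℝ) (a := 1) hreg (v := y)
    simpa [Matrix.mulVec, dotProduct, G.adj_comm y] using this
  simp only [Matrix.mulVec, dotProduct]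
  rw [sum_comm]
  simp only [← sum_mul, h, mul_sum]

theorem sum_sq_adjMatrix_mulVec_le (hreg : G.IsRegularOfDegree d) (u : Fin n → ℝ) :
    ∑ x, (G.adjMatrix ℝ).mulVec u x ^ 2 ≤ d ^ 2 * ∑ x, u x ^ 2 := by
  calc ∑ x, (G.adjMatrix ℝ).mulVec u x ^ 2
      ≤ ∑ x, d * (G.adjMatrix ℝ).mulVec (fun y => u y ^ 2) x := by
        refine sum_le_sum fun x _ => ?_
        rw [SimpleGraph.adjMatrix_mulVec_apply, SimpleGraph.adjMatrix_mulVec_apply]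
        refine sq_sum_le_card_mul_sum_sq.trans_eq ?_
        rw [SimpleGraph.card_neighborFinset_eq_degree, hreg x]
    _ = d ^ 2 * ∑ x, u x ^ 2 := by
        rw [← mul_sum, sum_adjMatrix_mulVec hreg]
        ring

theorem sum_sq_walkMass_le (hreg : G.IsRegularOfDegree d) (hd : (0 : ℝ) < d)
    (W : ℕ → Finset (Fin n)) (k : ℕ) :
    ∑ x, walkMass G d W k x ^ 2 ≤ (W 0).card := by
  induction k with
  | zero => simp [walkMass]
  | succ k ih =>
    calc ∑ x, walkMass G d W (k + 1) x ^ 2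
        ≤ ∑ x, ((G.adjMatrix ℝ).mulVec (walkMass G d W k) x / d) ^ 2 := by
          refine sum_le_sum fun x _ => ?_
          by_cases h : x ∈ W (k + 1)
          · simp [walkMass, h]
          · simp only [walkMass, h, if_false, zero_mul, ne_eq, OfNat.ofNat_ne_zero,
              not_false_eq_true, zero_pow]
            positivity
      _ = (∑ x, (G.adjMatrix ℝ).mulVec (walkMass G d W k) x ^ 2) / d ^ 2 := by
          simp only [div_pow, sum_div]
      _ ≤ ∑ x, walkMass G d W k x ^ 2 := by
          rw [div_le_iff₀ (by positivity), mul_comm]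
          exact sum_sq_adjMatrix_mulVec_le hreg _
      _ ≤ (W 0).card := ih

theorem sum_sq_sub_mean (hn : (n : ℝ) ≠ 0) (u : Fin n → ℝ) (a : ℝ) (ha : a = (∑ x, u x) / n) :
    ∑ x, (u x - a) ^ 2 = ∑ x, u x ^ 2 - n * a ^ 2 := by
  have h : ∑ x, u x = n * a := by rw [ha]; field_simp
  simp only [sub_sq, sum_add_distrib, sum_sub_distrib, ← sum_mul, ← mul_sum, h]
  simp
  ring

/-- The mixing estimate for a single step of the walk. -/
theorem abs_sum_indicator_mulVec_sub_le (hn : (0 : ℝ) < n) (hd : (0 : ℝ) < d)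
    (hreg : G.IsRegularOfDegree d) {lam : ℝ} (hlam0 : 0 ≤ lam)
    (hlam : ∀ u : Fin n → ℝ, ∑ i, u i = 0 →
      ∑ j, ((G.adjMatrix ℝ).mulVec u j) ^ 2 ≤ lam ^ 2 * ∑ i, (u i) ^ 2)
    (S : Finset (Fin n)) (f : Fin n → ℝ) {a b : ℝ} (ha : a = (S.card : ℝ) / n)
    (hb : b = (∑ x, f x) / n) {c : ℝ} (hc : (∑ x, (f x - b) ^ 2) / n ≤ c) :
    |(∑ x, (if x ∈ S then 1 else 0) * ((G.adjMatrix ℝ).mulVec f x / d)) / n - b * a| ≤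
      lam / d * √(c * (a * (1 - a))) := by
  set A := G.adjMatrix ℝ
  set g : Fin n → ℝ := fun x => f x - b
  have hg : ∑ x, g x = 0 := by
    simp only [g, sum_sub_distrib, hb]
    simp
    field_simp
    ring
  have hAg (x : Fin n) : A.mulVec g x = A.mulVec f x - d * b := by
    have : A.mulVec g = A.mulVec f - A.mulVec (Function.const _ b) := by
      rw [← Matrix.mulVec_sub]; rfl
    rw [this, Pi.sub_apply, SimpleGraph.adjMatrix_mulVec_const_apply_of_regular hreg]
  have hSa : a = (∑ x, if x ∈ S then (1 : ℝ) else 0) / n := by simp [ha]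
  have hSsum : (∑ x, if x ∈ S then (1 : ℝ) else 0) = n * a := by rw [hSa]; field_simp
  have hsum : (∑ x, (if x ∈ S then 1 else 0) * (A.mulVec f x / d)) / n - b * a =
      (∑ x, ((if x ∈ S then 1 else 0) - a) * A.mulVec g x) / (n * d) := by
    have h0 : ∑ x, A.mulVec g x = 0 := by rw [sum_adjMatrix_mulVec hreg, hg, mul_zero]
    have h1 : ∑ x, ((if x ∈ S then 1 else 0) - a) * A.mulVec g x =
        ∑ x, (if x ∈ S then 1 else 0) * A.mulVec f x - d * b * (n * a) := by
      simp only [sub_mul, sum_sub_distrib, ← mul_sum, h0]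
      simp only [hAg, mul_sub, sum_sub_distrib, ← sum_mul, hSsum]
      ring
    rw [h1]
    simp only [← mul_div_assoc, ← sum_div]
    field_simp
  have hvar : ∑ x, ((if x ∈ S then (1 : ℝ) else 0) - a) ^ 2 = n * (a * (1 - a)) := by
    rw [sum_sq_sub_mean hn.ne' _ a hSa]
    simp only [ite_pow, one_pow, ne_eq, OfNat.ofNat_ne_zero, not_false_eq_true, zero_pow, hSsum]
    ring
  have hvar0 : 0 ≤ a * (1 - a) := by
    have : 0 ≤ n * (a * (1 - a)) := hvar ▸ sum_nonneg fun x _ => sq_nonneg _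
    exact nonneg_of_mul_nonneg_right this hn
  have hCS := sum_mul_sq_le_sq_mul_sq univ (fun x => (if x ∈ S then (1 : ℝ) else 0) - a)
    (fun x => A.mulVec g x)
  rw [hvar] at hCS
  have hgc : ∑ x, g x ^ 2 ≤ n * c := by rwa [div_le_iff₀ hn, mul_comm] at hc
  have hc0 : 0 ≤ c := (div_nonneg (sum_nonneg fun x _ => sq_nonneg _) hn.le).trans hc
  rw [hsum]
  apply abs_le_of_sq_le_sq _ (by positivity)
  rw [mul_pow, Real.sq_sqrt (mul_nonneg hc0 hvar0), div_pow, div_pow, div_le_iff₀ (by positivity)]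
  calc _ ≤ n * (a * (1 - a)) * (lam ^ 2 * (n * c)) :=
        hCS.trans (by gcongr; exact (hlam g hg).trans (by gcongr))
    _ = _ := by field_simp

end Graph

theorem mul_one_sub_le_quarter (x : ℝ) : x * (1 - x) ≤ 1 / 4 := by
  nlinarith [sq_nonneg (x - 1 / 2)]

/-- The explicit mixing error is at most `(2t - 3) / 4`. -/
theorem error_le (t : ℕ) (ht : 2 ≤ t) (α : ℕ → ℝ) (h0 : ∀ i, 0 ≤ α i) (h1 : ∀ i, α i ≤ 1) :
    √(α 0 * (1 - α 0) * (α 1 * (1 - α 1))) * ∏ k ∈ Ico 2 t, α k +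
      ∑ i ∈ Ico 2 t, √(α 0 * (α i * (1 - α i))) * ∏ k ∈ Ico (i + 1) t, α k ≤
        (2 * (t : ℝ) - 3) / 4 := by
  have hprod (s : Finset ℕ) : ∏ k ∈ s, α k ≤ 1 := prod_le_one (fun i _ => h0 i) fun i _ => h1 i
  have hv (i : ℕ) : 0 ≤ α i * (1 - α i) := mul_nonneg (h0 i) (sub_nonneg.2 (h1 i))
  have hfirst : √(α 0 * (1 - α 0) * (α 1 * (1 - α 1))) ≤ 1 / 4 := by
    rw [Real.sqrt_le_left (by norm_num)]
    nlinarith [mul_le_mul (mul_one_sub_le_quarter (α 0)) (mul_one_sub_le_quarter (α 1)) (hv 1)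
      (by norm_num)]
  have hterm (i : ℕ) : √(α 0 * (α i * (1 - α i))) ≤ 1 / 2 := by
    rw [Real.sqrt_le_left (by norm_num)]
    nlinarith [mul_le_mul (h1 0) (mul_one_sub_le_quarter (α i)) (hv i) zero_le_one]
  have hle {x y : ℝ} (hx : x ≤ y) (hx0 : 0 ≤ x) (s : Finset ℕ) : x * ∏ k ∈ s, α k ≤ y :=
    (mul_le_of_le_one_right hx0 (hprod s)).trans hx
  calc _ ≤ 1 / 4 + ∑ i ∈ Ico 2 t, (1 / 2 : ℝ) :=
        add_le_add (hle hfirst (Real.sqrt_nonneg _) _)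
          (sum_le_sum fun i _ => hle (hterm i) (Real.sqrt_nonneg _) _)
    _ = (2 * (t : ℝ) - 3) / 4 := by
        rw [sum_const, Nat.card_Ico, nsmul_eq_mul, Nat.cast_sub ht]
        push_cast
        ring

theorem abs_mean_walkMass_sub_le {n d : ℕ} {G : SimpleGraph (Fin n)} [DecidableRel G.Adj]
    (hn : (0 : ℝ) < n) (hd : (0 : ℝ) < d) (hreg : G.IsRegularOfDegree d) {lam : ℝ}
    (hlam0 : 0 ≤ lam)
    (hlam : ∀ u : Fin n → ℝ, ∑ i, u i = 0 →
      ∑ j, ((G.adjMatrix ℝ).mulVec u j) ^ 2 ≤ lam ^ 2 * ∑ i, (u i) ^ 2)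
    (W : ℕ → Finset (Fin n)) (α : ℕ → ℝ) (hα : ∀ i, α i = ((W i).card : ℝ) / n) (k : ℕ) :
    |(∑ x, walkMass G d W (k + 1) x) / n - ∏ i ∈ range (k + 2), α i| ≤
      (lam / d) *
        (√(α 0 * (1 - α 0) * (α 1 * (1 - α 1))) * ∏ j ∈ Ico 2 (k + 2), α j +
          ∑ i ∈ Ico 2 (k + 2),
            √(α 0 * (α i * (1 - α i))) * ∏ j ∈ Ico (i + 1) (k + 2), α j) := by
  induction k with
  | zero =>
    have hb : α 0 = (∑ x, walkMass G d W 0 x) / n := by simp [walkMass, hα]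
    have hc : (∑ x, (walkMass G d W 0 x - α 0) ^ 2) / n ≤ α 0 * (1 - α 0) := by
      rw [sum_sq_sub_mean hn.ne' _ _ hb]
      have : ∑ x, walkMass G d W 0 x ^ 2 = n * α 0 := by
        rw [hα]
        simp only [walkMass, ite_pow, one_pow, ne_eq, OfNat.ofNat_ne_zero, not_false_eq_true,
          zero_pow]
        simp
        field_simp
      rw [this, div_le_iff₀ hn]
      exact le_of_eq (by ring)
    have := abs_sum_indicator_mulVec_sub_le hn hd hreg hlam0 hlam (W 1) _ (hα 1) hb hc
    simpa [prod_range_succ, walkMass] using this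
  | succ k ih =>
    set M := (∑ x, walkMass G d W (k + 1) x) / n with hM
    have hc : (∑ x, (walkMass G d W (k + 1) x - M) ^ 2) / n ≤ α 0 := by
      rw [sum_sq_sub_mean hn.ne' _ _ hM, hα 0]
      gcongr
      exact (sub_le_self _ (by positivity)).trans (sum_sq_walkMass_le hreg hd W (k + 1))
    have hstep := abs_sum_indicator_mulVec_sub_le hn hd hreg hlam0 hlam (W (k + 2)) _
      (hα (k + 2)) hM hc
    have hα0 : 0 ≤ α (k + 2) := by rw [hα]; positivity
    have hsum : ∑ i ∈ Ico 2 (k + 2), √(α 0 * (α i * (1 - α i))) * ∏ j ∈ Ico (i + 1) (k + 3), α j =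
        (∑ i ∈ Ico 2 (k + 2), √(α 0 * (α i * (1 - α i))) * ∏ j ∈ Ico (i + 1) (k + 2), α j) *
          α (k + 2) := by
      rw [sum_mul]
      refine sum_congr rfl fun i hi => ?_
      rw [prod_Ico_succ_top (by have := (mem_Ico.1 hi).2; omega), mul_assoc]
    rw [prod_range_succ, prod_Ico_succ_top (by omega), sum_Ico_succ_top (by omega), hsum,
      Ico_self, prod_empty]
    calc _ ≤ |(∑ x, walkMass G d W (k + 2) x) / n - M * α (k + 2)| +
          |M - ∏ i ∈ range (k + 2), α i| * α (k + 2) := by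
          rw [← abs_of_nonneg hα0, ← abs_mul, abs_of_nonneg hα0, sub_mul]
          exact abs_sub_le _ _ _
      _ ≤ _ := add_le_add hstep (mul_le_mul_of_nonneg_right ih hα0)
      _ = _ := by ring

end WalkMixing

/-- Expander mixing for the walk hypergraph of a `d`-regular graph:
`|e(W₁,…,W_t)/(n·d^{t−1}) − ∏ αᵢ|` is bounded by the explicit
`(λ/d)`-expression, which in turn is at most `(2t−3)·λ/(4d)`. -/
theorem walk_hypergraph_mixing (t n d : ℕ) (ht : 2 ≤ t)
    (G : SimpleGraph (Fin n)) [DecidableRel G.Adj]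
    (hconn : G.Connected) (hreg : G.IsRegularOfDegree d)
    (lam : ℝ) (hlam0 : 0 < lam) (hlamd : lam < d)
    (hlam : ∀ u : Fin n → ℝ, ∑ i, u i = 0 →
      ∑ j, ((G.adjMatrix ℝ).mulVec u j) ^ 2 ≤ lam ^ 2 * ∑ i, (u i) ^ 2)
    (W : ℕ → Finset (Fin n)) (hW : ∀ i, i < t → (W i).Nonempty)
    (α : ℕ → ℝ) (hα : ∀ i, α i = ((W i).card : ℝ) / n) :
    |(((Finset.univ.filter (fun v : Fin t → Fin n =>
            walkEdge G v ∧ ∀ i : Fin t, v i ∈ W (i : ℕ))).card : ℝ)) /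
          ((n : ℝ) * (d : ℝ) ^ (t - 1)) - ∏ i ∈ Finset.range t, α i| ≤
        (lam / d) *
          (Real.sqrt (α 0 * (1 - α 0) * (α 1 * (1 - α 1))) * ∏ k ∈ Finset.Ico 2 t, α k +
            ∑ i ∈ Finset.Ico 2 t,
              Real.sqrt (α 0 * (α i * (1 - α i))) * ∏ k ∈ Finset.Ico (i + 1) t, α k) ∧
      (lam / d) *
          (Real.sqrt (α 0 * (1 - α 0) * (α 1 * (1 - α 1))) * ∏ k ∈ Finset.Ico 2 t, α k +
            ∑ i ∈ Finset.Ico 2 t,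
              Real.sqrt (α 0 * (α i * (1 - α i))) * ∏ k ∈ Finset.Ico (i + 1) t, α k) ≤
        (2 * (t : ℝ) - 3) * lam / (4 * d) := by
  have hd : (0 : ℝ) < d := hlam0.trans hlamd
  obtain ⟨v₀⟩ := hconn.nonempty
  have hn : (0 : ℝ) < n := by exact_mod_cast v₀.pos
  constructor
  · obtain ⟨k, rfl⟩ : ∃ k, t = k + 2 := ⟨t - 2, by omega⟩
    have hcount := WalkMixing.sum_walks_eq_sum_walkMass G hd.ne' W (k + 1) fun _ => 1
    rw [Finset.sum_boole] at hcount
    simp only [mul_one] at hcount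
    rw [hcount, Nat.add_sub_assoc (by norm_num), mul_comm (n : ℝ),
      mul_div_mul_left _ _ (pow_ne_zero _ hd.ne')]
    exact WalkMixing.abs_mean_walkMass_sub_le hn hd hreg hlam0.le hlam W α hα k
  · have h0 (i : ℕ) : 0 ≤ α i := by rw [hα]; positivity
    have h1 (i : ℕ) : α i ≤ 1 := by
      rw [hα, div_le_one hn]
      exact_mod_cast (Finset.card_le_univ (W i)).trans_eq (Fintype.card_fin n)
    refine (mul_le_mul_of_nonneg_left (WalkMixing.error_le t ht α h0 h1)
      (by positivity)).trans_eq ?_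
    field_simp
end

section
/- Let t ≥ 2 and let T ∈ ℝ^{n_1 × ⋯ × n_t} be an order-t tensor of CP rank r with |T|_∞ ≤ 1. Then T admits a decomposition into r^{t−1} rank-one tensors, T = Σ_{j=1}^{r^{t−1}} u_j^1 ∘ u_j^2 ∘ ⋯ ∘ u_j^t, such that for every 1 ≤ k ≤ t−1 and every coordinate 1 ≤ s ≤ n_k one has Σ_{j=1}^{r^{t−1}} (u_j^k(s))² ≤ r^{t−1}, and for every coordinate 1 ≤ s ≤ n_t one has Σ_{j=1}^{r^{t−1}} (u_j^t(s))² ≤ r^{t−2}. -/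
open Classical

/-- The CP rank of an order-`t` tensor: the minimal number `r` of rank-one
terms summing to `T`. -/
noncomputable def cpRank {t : ℕ} {n : Fin t → ℕ}
    (T : ((i : Fin t) → Fin (n i)) → ℝ) : ℕ :=
  sInf { r : ℕ | ∃ U : (i : Fin t) → Fin (n i) → Fin r → ℝ,
    ∀ x, T x = ∑ l : Fin r, ∏ i, U i (x i) l }

/-- If the linear function `1 + τ q` is dominated by `(1 + τ) ^ d` for all `τ > 0`, then its slope
is at most `d`. -/
lemma slope_le_of_one_add_mul_le_pow {q : ℝ} {d : ℕ}
    (h : ∀ τ : ℝ, 0 < τ → 1 + τ * q ≤ (1 + τ) ^ d) : q ≤ d := by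
  have hderiv : HasDerivAt (fun τ : ℝ => (1 + τ) ^ d) d 0 := by
    simpa using ((hasDerivAt_id (0 : ℝ)).const_add 1).fun_pow d
  have hlim := hderiv.tendsto_slope_zero_right
  refine ge_of_tendsto hlim ?_
  filter_upwards [self_mem_nhdsWithin] with τ hτ
  have hτ' : (0 : ℝ) < τ := hτ
  have := h τ hτ'
  simp only [zero_add, add_zero, one_pow, smul_eq_mul]
  rw [inv_mul_eq_div, le_div_iff₀ hτ']
  linarith

/-- The moment matrix `∑ a, p a • v a (v a)ᵀ` of the rows of `M` with weights `p`. -/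
noncomputable def momentMatrix {α ι : Type*} [Fintype α] (M : Matrix α ι ℝ) (p : α → ℝ) :
    Matrix ι ι ℝ :=
  Matrix.of fun i j => ∑ a, p a * M a i * M a j

section Moment

open Matrix MatrixOrder

variable {α ι : Type*} [Fintype α]

lemma momentMatrix_eq [DecidableEq α] (M : Matrix α ι ℝ) (p : α → ℝ) :
    momentMatrix M p = Mᵀ * (diagonal p * M) := by
  ext i j
  rw [Matrix.mul_apply]
  simp only [momentMatrix, Matrix.of_apply, Matrix.transpose_apply, Matrix.diagonal_mul]
  exact Finset.sum_congr rfl fun a _ => by ring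

lemma posSemidef_momentMatrix [Fintype ι] (M : Matrix α ι ℝ) {p : α → ℝ} (hp : ∀ a, 0 ≤ p a) :
    (momentMatrix M p).PosSemidef := by
  have h : momentMatrix M p
      = (Matrix.of fun a i => √(p a) * M a i)ᴴ * Matrix.of fun a i => √(p a) * M a i := by
    ext i j
    simp only [momentMatrix, Matrix.mul_apply, Matrix.of_apply, Matrix.conjTranspose_apply,
      star_trivial]
    refine Finset.sum_congr rfl fun a _ => ?_
    linear_combination (-(M a i * M a j)) * Real.mul_self_sqrt (hp a)
  rw [h]
  exact Matrix.posSemidef_conjTranspose_mul_self _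

/-- Kiefer–Wolfowitz: a matrix with linearly independent columns has a probability weight on its
rows whose moment matrix `S` satisfies `vᵀ S⁻¹ v ≤ card ι` for every row `v`. -/
lemma exists_weight_moment_bound [Fintype ι] [DecidableEq ι] [Nonempty α]
    (M : Matrix α ι ℝ) (hM : Function.Injective M.mulVec) :
    ∃ p ∈ stdSimplex ℝ α, (momentMatrix M p).det ≠ 0 ∧
      ∀ a, M a ⬝ᵥ (momentMatrix M p)⁻¹ *ᵥ M a ≤ Fintype.card ι := by
  have hcont : Continuous fun p : α → ℝ => (momentMatrix M p).det := by
    refine Continuous.matrix_det ?_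
    refine continuous_matrix fun i j => ?_
    simp only [momentMatrix, Matrix.of_apply]
    fun_prop
  have hN : (0 : ℝ) < Fintype.card α := by exact_mod_cast Fintype.card_pos
  have hunif : (fun _ : α => (Fintype.card α : ℝ)⁻¹) ∈ stdSimplex ℝ α := by
    refine ⟨fun _ => by positivity, ?_⟩
    simp [hN.ne']
  obtain ⟨p, hp, hmax⟩ := (isCompact_stdSimplex ℝ α).exists_isMaxOn ⟨_, hunif⟩ hcont.continuousOn
  have hdet : 0 < (momentMatrix M p).det := by
    refine lt_of_lt_of_le ?_ (hmax hunif)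
    have h : momentMatrix M (fun _ : α => (Fintype.card α : ℝ)⁻¹)
        = (Fintype.card α : ℝ)⁻¹ • (Mᴴ * M) := by
      ext i j
      simp [momentMatrix, Matrix.mul_apply, Finset.mul_sum, mul_assoc]
    simp only [h, Matrix.det_smul]
    have := (Matrix.PosDef.conjTranspose_mul_self M hM).det_pos
    positivity
  refine ⟨p, hp, hdet.ne', fun a => slope_le_of_one_add_mul_le_pow fun τ hτ => ?_⟩
  set S := momentMatrix M p with hS
  have hq : (fun b => (1 + τ)⁻¹ * (p b + if b = a then τ else 0)) ∈ stdSimplex ℝ α := by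
    constructor
    · intro b
      have := hp.1 b
      dsimp only
      split_ifs <;> positivity
    · rw [← Finset.mul_sum, Finset.sum_add_distrib, hp.2]
      simp only [Finset.sum_ite_eq', Finset.mem_univ, if_true]
      field_simp
  have hle := hmax hq
  have hform : momentMatrix M (fun b => (1 + τ)⁻¹ * (p b + if b = a then τ else 0))
      = (1 + τ)⁻¹ • (S + replicateCol Unit (τ • M a) * replicateRow Unit (M a)) := by
    ext i j
    simp [hS, momentMatrix, Matrix.mul_apply, mul_assoc, add_mul, mul_add, Finset.mul_sum,
      Finset.sum_add_distrib]
  simp only [hform, Matrix.det_smul, Set.mem_ofPred_eq] at hle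
  rw [Matrix.det_add_replicateCol_mul_replicateRow (isUnit_iff_ne_zero.2 hdet.ne')] at hle
  have hval : (1 + replicateRow Unit (M a) * S⁻¹ * replicateCol Unit (τ • M a)).det
      = 1 + τ * (M a ⬝ᵥ S⁻¹ *ᵥ M a) := by
    rw [Matrix.det_unique, Matrix.mul_assoc, ← Matrix.replicateCol_mulVec]
    simp [Matrix.mul_apply, Matrix.mulVec_smul, dotProduct, Finset.mul_sum]
  rw [hval, inv_pow, inv_mul_le_iff₀ (by positivity), mul_comm] at hle
  exact le_of_mul_le_mul_right hle hdet

/-- Whitened form of `exists_weight_moment_bound`: an orthonormal system for the weight `p`. -/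
lemma exists_weight_orthonormal [Fintype ι] [DecidableEq ι] [Nonempty α]
    (M : Matrix α ι ℝ) (hM : Function.Injective M.mulVec) :
    ∃ p ∈ stdSimplex ℝ α, ∃ A : Matrix α ι ℝ,
      (∀ a, ∑ i, A a i ^ 2 ≤ Fintype.card ι) ∧ momentMatrix A p = 1 ∧
      ∀ a i, M a i = ∑ b, p b * (∑ j, A a j * A b j) * M b i := by
  obtain ⟨p, hp, hdet, hbound⟩ := exists_weight_moment_bound M hM
  obtain ⟨B, hB⟩ : ∃ B : Matrix ι ι ℝ, momentMatrix M p = Bᵀ * B := by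
    obtain ⟨B, hB⟩ := CStarAlgebra.nonneg_iff_eq_star_mul_self.mp
      (posSemidef_momentMatrix M hp.1).nonneg
    exact ⟨B, hB⟩
  have hBdet : IsUnit B.det := by
    refine isUnit_iff_ne_zero.2 fun h => hdet ?_
    rw [hB, Matrix.det_mul, h, mul_zero]
  have hBt : IsUnit Bᵀ.det := by rwa [Matrix.det_transpose]
  have hmoment : Mᵀ * (diagonal p * M) = Bᵀ * B := by rw [← momentMatrix_eq, hB]
  have hgram : B⁻¹ * B⁻¹ᵀ = (momentMatrix M p)⁻¹ := by
    rw [hB, Matrix.mul_inv_rev, Matrix.transpose_nonsing_inv]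
  refine ⟨p, hp, M * B⁻¹, fun a => ?_, ?_, fun a i => ?_⟩
  · have h : ∑ i, (M * B⁻¹) a i ^ 2 = M a ⬝ᵥ (momentMatrix M p)⁻¹ *ᵥ M a := by
      have h1 : ∑ i, (M * B⁻¹) a i ^ 2 = ((M * B⁻¹) * (M * B⁻¹)ᵀ) a a := by
        rw [Matrix.mul_apply]
        exact Finset.sum_congr rfl fun i _ => sq _
      rw [h1, Matrix.transpose_mul, Matrix.mul_assoc, ← Matrix.mul_assoc B⁻¹, hgram]
      rfl
    rw [h]
    exact hbound a
  · rw [momentMatrix_eq, Matrix.transpose_mul, Matrix.mul_assoc, ← Matrix.mul_assoc (diagonal p),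
      ← Matrix.mul_assoc Mᵀ, hmoment, Matrix.mul_assoc Bᵀ, Matrix.mul_nonsing_inv _ hBdet,
      Matrix.mul_one, Matrix.transpose_nonsing_inv, Matrix.nonsing_inv_mul _ hBt]
  · have h : M = (M * B⁻¹) * (M * B⁻¹)ᵀ * (diagonal p * M) := by
      rw [Matrix.transpose_mul, ← Matrix.mul_assoc (M * B⁻¹), Matrix.mul_assoc _ Mᵀ, hmoment,
        Matrix.transpose_nonsing_inv, Matrix.mul_assoc (M * B⁻¹), ← Matrix.mul_assoc Bᵀ⁻¹,
        Matrix.nonsing_inv_mul _ hBt, Matrix.one_mul, Matrix.mul_assoc,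
        Matrix.nonsing_inv_mul _ hBdet, Matrix.mul_one]
    calc M a i = ((M * B⁻¹) * (M * B⁻¹)ᵀ * (diagonal p * M)) a i := by rw [← h]
      _ = ∑ b, ((M * B⁻¹) * (M * B⁻¹)ᵀ) a b * (p b * M b i) := by
        rw [Matrix.mul_apply]
        simp only [Matrix.diagonal_mul]
      _ = _ := by
        refine Finset.sum_congr rfl fun b _ => ?_
        rw [Matrix.mul_apply]
        simp only [Matrix.transpose_apply]
        ring

end Moment

/-- A space of functions on a finite set of dimension at most `r` is reproduced by a system of
`r` functions, orthogonal of norm at most one for some subprobability weight, whose squares sum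
pointwise to at most `r`. -/
lemma Submodule.exists_weight_reproducing {α : Type*} [Fintype α] (W : Submodule ℝ (α → ℝ))
    {r : ℕ} (hW : Module.finrank ℝ W ≤ r) :
    ∃ (p : α → ℝ) (A : α → Fin r → ℝ) (e : Fin r → ℝ),
      (∀ a, 0 ≤ p a) ∧ ∑ a, p a ≤ 1 ∧ (∀ i, 0 ≤ e i ∧ e i ≤ 1) ∧
      (∀ a, ∑ i, A a i ^ 2 ≤ r) ∧
      (∀ i j, ∑ a, p a * A a i * A a j = if i = j then e i else 0) ∧
      ∀ f ∈ W, ∀ a, f a = ∑ b, p b * (∑ j, A a j * A b j) * f b := by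
  rcases isEmpty_or_nonempty α with hα | hα
  · exact ⟨0, 0, 0, by simp, by simp, by simp, by simp, by simp, fun f _ a => hα.elim a⟩
  let β := Module.finBasis ℝ W
  let M : Matrix α (Fin (Module.finrank ℝ W)) ℝ := Matrix.of fun a i => (β i : α → ℝ) a
  have hmul : ∀ c, M.mulVec c = ((∑ i, c i • β i : W) : α → ℝ) := by
    intro c
    ext a
    simp [M, Matrix.mulVec, dotProduct, mul_comm]
  have hM : Function.Injective M.mulVec := by
    intro c c' h
    rw [hmul, hmul] at h
    have h' := Subtype.ext h
    have := congrArg (fun w => (β.repr w : _ → ℝ)) h'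
    simpa only [β.repr_sum_self] using this
  obtain ⟨p, hp, A, hA, hG, hR⟩ := exists_weight_orthonormal M hM
  obtain ⟨k, rfl⟩ := Nat.exists_eq_add_of_le hW
  have hG' : ∀ i j, ∑ a, p a * A a i * A a j = if i = j then 1 else 0 := fun i j => by
    simpa [momentMatrix, Matrix.one_apply] using congrFun (congrFun hG i) j
  refine ⟨p, fun a => Fin.append (A a) 0, Fin.append 1 0, hp.1, hp.2.le, ?_, ?_, ?_, ?_⟩
  · intro i
    refine Fin.addCases (fun i => ?_) (fun i => ?_) i <;> simp
  · intro a
    have := hA a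
    simp only [Fintype.card_fin] at this
    simp only [Fin.sum_univ_add, Fin.append_left, Fin.append_right, Nat.cast_add]
    simp only [Pi.zero_apply, ne_eq, OfNat.ofNat_ne_zero, not_false_eq_true, zero_pow,
      Finset.sum_const_zero, add_zero]
    have : (0 : ℝ) ≤ k := k.cast_nonneg
    linarith
  · intro i j
    refine Fin.addCases (fun i => ?_) (fun i => ?_) i <;>
      refine Fin.addCases (fun j => ?_) (fun j => ?_) j
    · simp [hG']
    · have h : Fin.castAdd k i ≠ Fin.natAdd _ j := by
        simp only [ne_eq, Fin.ext_iff, Fin.val_castAdd, Fin.val_natAdd]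
        omega
      simp [h]
    all_goals simp
  · intro f hf a
    have hf' : f = M.mulVec (β.repr ⟨f, hf⟩) := by rw [hmul, β.sum_repr]
    have hfa : ∀ b, f b = ∑ i, M b i * β.repr ⟨f, hf⟩ i := fun b => congrFun hf' b
    simp only [Fin.sum_univ_add, Fin.append_left, Fin.append_right, Pi.zero_apply, mul_zero,
      Finset.sum_const_zero, add_zero]
    simp only [hfa, Finset.mul_sum _ _ (_ * _)]
    rw [Finset.sum_comm]
    refine Finset.sum_congr rfl fun i _ => ?_
    rw [hR a i, Finset.sum_mul]
    exact Finset.sum_congr rfl fun b _ => by ring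

/-- Bessel's inequality for a weighted orthogonal system of functions of norm at most one. -/
lemma weighted_bessel {Y J : Type*} [Fintype Y] [Fintype J] [DecidableEq J]
    (P : Y → ℝ) (A : Y → J → ℝ) (e : J → ℝ) (hP : ∀ y, 0 ≤ P y) (he : ∀ j, e j ≤ 1)
    (hG : ∀ i j, ∑ y, P y * A y i * A y j = if i = j then e i else 0) (f : Y → ℝ) :
    ∑ j, (∑ y, P y * A y j * f y) ^ 2 ≤ ∑ y, P y * f y ^ 2 := by
  set c : J → ℝ := fun j => ∑ y, P y * A y j * f y with hc
  have hnonneg : 0 ≤ ∑ y, P y * (f y - ∑ j, c j * A y j) ^ 2 :=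
    Finset.sum_nonneg fun y _ => mul_nonneg (hP y) (sq_nonneg _)
  have hcross : ∑ y, P y * f y * ∑ j, c j * A y j = ∑ j, c j ^ 2 := by
    simp only [Finset.mul_sum]
    rw [Finset.sum_comm]
    refine Finset.sum_congr rfl fun j _ => ?_
    rw [sq]
    nth_rewrite 3 [hc]
    rw [Finset.mul_sum]
    exact Finset.sum_congr rfl fun y _ => by ring
  have hquad : ∑ y, P y * (∑ j, c j * A y j) ^ 2 = ∑ j, c j ^ 2 * e j := by
    have h : ∀ y, P y * (∑ j, c j * A y j) ^ 2
        = ∑ i, ∑ j, c i * c j * (P y * A y i * A y j) := by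
      intro y
      rw [sq, Finset.sum_mul_sum, Finset.mul_sum]
      refine Finset.sum_congr rfl fun i _ => ?_
      rw [Finset.mul_sum]
      exact Finset.sum_congr rfl fun j _ => by ring
    simp only [h]
    rw [Finset.sum_comm]
    refine Finset.sum_congr rfl fun i _ => ?_
    rw [Finset.sum_comm]
    simp only [← Finset.mul_sum, hG]
    simp [sq]
  have hexpand : ∑ y, P y * (f y - ∑ j, c j * A y j) ^ 2
      = ∑ y, P y * f y ^ 2 - 2 * ∑ j, c j ^ 2 + ∑ j, c j ^ 2 * e j := by
    rw [← hcross, ← hquad, Finset.mul_sum, ← Finset.sum_sub_distrib, ← Finset.sum_add_distrib]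
    exact Finset.sum_congr rfl fun y _ => by ring
  have hle : ∑ j, c j ^ 2 * e j ≤ ∑ j, c j ^ 2 :=
    Finset.sum_le_sum fun j _ => mul_le_of_le_one_right (sq_nonneg _) (he j)
  linarith

/-- Every tensor of positive order has a decomposition into rank-one tensors. -/
lemma exists_rankOne_decomposition {m : ℕ} {n : Fin (m + 1) → ℕ}
    (T : ((i : Fin (m + 1)) → Fin (n i)) → ℝ) :
    ∃ (r : ℕ) (U : (i : Fin (m + 1)) → Fin (n i) → Fin r → ℝ),
      ∀ x, T x = ∑ l : Fin r, ∏ i, U i (x i) l := by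
  let E := (Fintype.equivFin ((i : Fin (m + 1)) → Fin (n i))).symm
  refine ⟨_, fun i s l => (if i = 0 then T (E l) else 1) * (if E l i = s then 1 else 0),
    fun x => ?_⟩
  rw [E.sum_comp fun y => ∏ i, (if i = 0 then T y else 1) * (if y i = x i then 1 else 0)]
  rw [Finset.sum_eq_single x]
  · simp
  · intro y _ hy
    obtain ⟨i, hi⟩ := Function.ne_iff.1 hy
    exact Finset.prod_eq_zero (Finset.mem_univ i) (by simp [hi])
  · simp

/-- The bounded decomposition, with terms indexed by functions `Fin m → Fin r`. -/
lemma exists_bounded_decomposition {m r : ℕ} {n : Fin (m + 1) → ℕ}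
    (T : ((i : Fin (m + 1)) → Fin (n i)) → ℝ)
    (U : (i : Fin (m + 1)) → Fin (n i) → Fin r → ℝ)
    (hU : ∀ x, T x = ∑ l : Fin r, ∏ i, U i (x i) l) (hinf : ∀ x, |T x| ≤ 1) :
    ∃ u : (Fin m → Fin r) → (i : Fin (m + 1)) → Fin (n i) → ℝ,
      (∀ x, T x = ∑ J, ∏ i, u J i (x i)) ∧
      (∀ (k : Fin m) (s : Fin (n k.castSucc)),
        ∑ J, (u J k.castSucc s) ^ 2 ≤ (r : ℝ) ^ m) ∧
      (∀ s : Fin (n (Fin.last m)), ∑ J, (u J (Fin.last m) s) ^ 2 ≤ 1) := by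
  have key : ∀ k : Fin m, _ := fun k =>
    (Submodule.span ℝ (Set.range fun l a => U k.castSucc a l)).exists_weight_reproducing
      ((finrank_range_le_card _).trans (Fintype.card_fin r).le)
  choose p A e hp hp1 he hA hG hR using key
  let P : ((k : Fin m) → Fin (n k.castSucc)) → ℝ := fun y => ∏ k, p k (y k)
  let B : ((k : Fin m) → Fin (n k.castSucc)) → (Fin m → Fin r) → ℝ :=
    fun y J => ∏ k, A k (y k) (J k)
  have hP : ∀ y, 0 ≤ P y := fun y => Finset.prod_nonneg fun k _ => hp k _
  have hP1 : ∑ y, P y ≤ 1 := by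
    rw [← Fintype.prod_sum]
    exact Finset.prod_le_one (fun k _ => Finset.sum_nonneg fun a _ => hp k a) fun k _ => hp1 k
  have hPG : ∀ I J, ∑ y, P y * B y I * B y J = if I = J then ∏ k, e k (I k) else 0 := by
    intro I J
    simp only [P, B, ← Finset.prod_mul_distrib]
    rw [← Fintype.prod_sum fun k a => p k a * A k a (I k) * A k a (J k)]
    simp only [hG]
    split_ifs with h
    · simp [h]
    · obtain ⟨k, hk⟩ := Function.ne_iff.1 h
      exact Finset.prod_eq_zero (Finset.mem_univ k) (by simp [hk])
  have hPe : ∀ J : Fin m → Fin r, ∏ k, e k (J k) ≤ 1 := fun J =>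
    Finset.prod_le_one (fun k _ => (he k _).1) fun k _ => (he k _).2
  let C : (Fin m → Fin r) → Fin (n (Fin.last m)) → ℝ :=
    fun J s => ∑ y, P y * B y J * T (Fin.snoc y s)
  refine ⟨fun J => Fin.snoc (α := fun i => Fin (n i) → ℝ) (fun k s => A k s (J k)) (C J),
    fun x => ?_, fun k s => ?_, fun s => ?_⟩
  · have hT : ∀ y s, T (Fin.snoc y s)
        = ∑ l, (∏ k : Fin m, U k.castSucc (y k) l) * U (Fin.last m) s l := fun y s => by
      simp [hU, Fin.prod_univ_castSucc]
    obtain ⟨y, s, rfl⟩ : ∃ (y : (k : Fin m) → Fin (n k.castSucc)) (s : Fin (n (Fin.last m))),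
        x = Fin.snoc y s := ⟨Fin.init x, x (Fin.last m), (Fin.snoc_init_self x).symm⟩
    simp only [Fin.prod_univ_castSucc, Fin.snoc_castSucc, Fin.snoc_last]
    have hrep : ∀ l, ∏ k : Fin m, U k.castSucc (y k) l
        = ∑ z, P z * (∑ J, B y J * B z J) * ∏ k : Fin m, U k.castSucc (z k) l := by
      intro l
      have hK : ∀ z, ∑ J, B y J * B z J = ∏ k, ∑ j, A k (y k) j * A k (z k) j := fun z => by
        rw [Fintype.prod_sum]
        simp only [B, Finset.prod_mul_distrib]
      simp only [P, hK, ← Finset.prod_mul_distrib]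
      rw [← Fintype.prod_sum fun k b =>
        p k b * (∑ j, A k (y k) j * A k b j) * U k.castSucc b l]
      exact Finset.prod_congr rfl fun k _ => hR k _ (Submodule.subset_span ⟨l, rfl⟩) (y k)
    calc T (Fin.snoc y s)
        = ∑ l, ∑ z, P z * (∑ J, B y J * B z J) * (∏ k : Fin m, U k.castSucc (z k) l)
            * U (Fin.last m) s l := by
          rw [hT]
          exact Finset.sum_congr rfl fun l _ => by rw [hrep, Finset.sum_mul]
      _ = ∑ z, P z * (∑ J, B y J * B z J) * T (Fin.snoc z s) := by
          rw [Finset.sum_comm]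
          refine Finset.sum_congr rfl fun z _ => ?_
          rw [hT, Finset.mul_sum _ _ (_ * _)]
          exact Finset.sum_congr rfl fun l _ => by ring
      _ = ∑ J, B y J * C J s := by
          simp only [C, Finset.mul_sum, Finset.sum_mul]
          rw [Finset.sum_comm]
          exact Finset.sum_congr rfl fun J _ => Finset.sum_congr rfl fun z _ => by ring
  · simp only [Fin.snoc_castSucc]
    have h : ∀ J : Fin m → Fin r, A k s (J k) ^ 2
        = ∏ k', if k' = k then A k s (J k') ^ 2 else 1 := fun J => by simp
    simp only [h]
    rw [← Fintype.prod_sum fun k' j => if k' = k then A k s j ^ 2 else (1 : ℝ)]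
    calc _ ≤ ∏ _k' : Fin m, (r : ℝ) := by
          refine Finset.prod_le_prod (fun k' _ => Finset.sum_nonneg fun j _ => ?_) fun k' _ => ?_
          · split_ifs <;> positivity
          · split_ifs
            · exact hA k s
            · simp
      _ = (r : ℝ) ^ m := by simp
  · simp only [Fin.snoc_last]
    calc ∑ J, C J s ^ 2 ≤ ∑ y, P y * T (Fin.snoc y s) ^ 2 :=
          weighted_bessel P B (fun J => ∏ k, e k (J k)) hP hPe hPG fun y => T (Fin.snoc y s)
      _ ≤ ∑ y, P y := Finset.sum_le_sum fun y _ =>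
          mul_le_of_le_one_right (hP y) ((sq_le_one_iff_abs_le_one _).2 (hinf _))
      _ ≤ 1 := hP1

/-- Any rank-`r` order-`t` tensor with `|T|_∞ ≤ 1` decomposes into `r^{t−1}`
rank-one tensors whose factors have columnwise squared sums bounded by
`r^{t−1}` in the first `t−1` modes and by `r^{t−2}` in the last mode. -/
theorem bounded_decomposition_of_rank (t : ℕ) (ht : 2 ≤ t)
    (n : Fin t → ℕ) (r : ℕ)
    (T : ((i : Fin t) → Fin (n i)) → ℝ)
    (hrank : cpRank T = r) (hinf : ∀ x, |T x| ≤ 1) :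
    ∃ u : Fin (r ^ (t - 1)) → (i : Fin t) → Fin (n i) → ℝ,
      (∀ x, T x = ∑ j, ∏ i, u j i (x i)) ∧
      (∀ i : Fin t, (i : ℕ) < t - 1 → ∀ s : Fin (n i),
        ∑ j, (u j i s) ^ 2 ≤ (r : ℝ) ^ (t - 1)) ∧
      (∀ s : Fin (n ⟨t - 1, by omega⟩),
        ∑ j, (u j ⟨t - 1, by omega⟩ s) ^ 2 ≤ (r : ℝ) ^ (t - 2)) := by
  obtain ⟨m, rfl⟩ : ∃ m, t = m + 1 := ⟨t - 1, by omega⟩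
  obtain ⟨U, hU⟩ : r ∈ { r : ℕ | ∃ U : (i : Fin (m + 1)) → Fin (n i) → Fin r → ℝ,
      ∀ x, T x = ∑ l : Fin r, ∏ i, U i (x i) l } :=
    hrank ▸ Nat.sInf_mem (exists_rankOne_decomposition T)
  obtain ⟨u, hu, hfirst, hlast⟩ := exists_bounded_decomposition T U hU hinf
  let E : Fin (r ^ (m + 1 - 1)) ≃ (Fin m → Fin r) := finFunctionFinEquiv.symm
  refine ⟨fun j => u (E j), fun x => ?_, fun i hi s => ?_, fun s => ?_⟩
  · rw [hu, E.sum_comp fun J => ∏ i, u J i (x i)]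
  · rw [E.sum_comp fun J => u J i s ^ 2]
    exact hfirst ⟨i, hi⟩ s
  · rw [E.sum_comp fun J => u J ⟨m + 1 - 1, by omega⟩ s ^ 2]
    rcases Nat.eq_zero_or_pos r with rfl | hr
    · have : Nonempty (Fin m) := ⟨⟨0, by omega⟩⟩
      simp
    · exact (hlast s).trans (one_le_pow₀ (by exact_mod_cast hr))
end
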